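/- Let I ⊆ S = K[x_1,…,x_n] be a monomial ideal such that I = Q_1 ∩ … ∩ Q_m is a reduced (irredundant) primary decomposition of I with P_i = √(Q_i), and suppose that G(P_i) ∩ G(P_j) = ∅ for all i ≠ j. Then sdepth_S(S/I) ≥ m − 1; in particular sdepth_S(S/I) ≥ depth_S(S/I), i.e., Stanley's conjecture holds for S/I. -/

import Mathlib

open MvPolynomial

/-- The Stanley space `u·K[Z]` inside the polynomial ring `K[x_i : i ∈ σ]`:
the `K`-span of all monomials `x^(u+v)` with `supp v ⊆ Z`. -/
noncomputable def stanleySpace (K : Type*) [Field K] {σ : Type*} (u : σ →₀ ℕ) (Z : Set σ) :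
    Submodule K (MvPolynomial σ K) :=
  Submodule.span K
    ((fun v : σ →₀ ℕ => (monomial (u + v) (1 : K) : MvPolynomial σ K)) ''
      {v | (v.support : Set σ) ⊆ Z})

/-- `(u, Z)` (indexed by a finite type `ι`) is a Stanley decomposition of the monomial
ideal `I`: the Stanley spaces `x^(u i)·K[Z i]` are independent and their (direct) sum is `I`
as a `K`-vector space.  (Inside the polynomial ring each Stanley space is automatically a
free `K[Z]`-module.) -/
def IsStanleyDecompOfIdeal {K σ : Type*} [Field K] {ι : Type} [Fintype ι]
    (I : Ideal (MvPolynomial σ K)) (u : ι → (σ →₀ ℕ)) (Z : ι → Finset σ) : Prop :=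
  iSupIndep (fun i => stanleySpace K (u i) (Z i)) ∧
    (⨆ i, stanleySpace K (u i) (Z i)) = Submodule.restrictScalars K I

/-- The Stanley depth of a monomial ideal `I`: the largest `d` such that there is a Stanley
decomposition of `I` all of whose Stanley spaces `u_i K[Z_i]` satisfy `|Z_i| ≥ d`. -/
noncomputable def sdepthIdeal {K σ : Type*} [Field K] (I : Ideal (MvPolynomial σ K)) : ℕ :=
  sSup {d | ∃ (ι : Type) (_ : Fintype ι) (_ : Nonempty ι) (u : ι → (σ →₀ ℕ))
    (Z : ι → Finset σ), IsStanleyDecompOfIdeal I u Z ∧ ∀ i, d ≤ (Z i).card}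

/-- `(u, Z)` is a Stanley decomposition of `S/I`:  each Stanley space `x^(u i)·K[Z i]` meets
`I` trivially (equivalently, its image in `S/I` is a free `K[Z i]`-module), the images of the
Stanley spaces in `S/I` are independent, and they sum to `S/I`. -/
def IsStanleyDecompOfQuotient {K σ : Type*} [Field K] {ι : Type} [Fintype ι]
    (I : Ideal (MvPolynomial σ K)) (u : ι → (σ →₀ ℕ)) (Z : ι → Finset σ) : Prop :=
  (∀ i, Disjoint (stanleySpace K (u i) (Z i)) (Submodule.restrictScalars K I)) ∧
    iSupIndep (fun i =>
      (stanleySpace K (u i) (Z i)).map (Ideal.Quotient.mkₐ K I).toLinearMap) ∧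
    (⨆ i, (stanleySpace K (u i) (Z i)).map (Ideal.Quotient.mkₐ K I).toLinearMap) = ⊤

/-- The Stanley depth of `S/I` for a monomial ideal `I`. -/
noncomputable def sdepthQuot {K σ : Type*} [Field K] (I : Ideal (MvPolynomial σ K)) : ℕ :=
  sSup {d | ∃ (ι : Type) (_ : Fintype ι) (_ : Nonempty ι) (u : ι → (σ →₀ ℕ))
    (Z : ι → Finset σ), IsStanleyDecompOfQuotient I u Z ∧ ∀ i, d ≤ (Z i).card}

/-- A monomial ideal: an ideal generated by monomials. -/
def IsMonomialIdeal {K σ : Type*} [Field K] (I : Ideal (MvPolynomial σ K)) : Prop :=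
  ∃ A : Set (σ →₀ ℕ), I = Ideal.span ((fun a => (monomial a (1 : K) : MvPolynomial σ K)) '' A)

/-- The (exponents of the) minimal monomial generators of a monomial ideal `I`:
monomials in `I` that are not proper multiples of monomials in `I`. -/
def minimalGenerators {K σ : Type*} [Field K] (I : Ideal (MvPolynomial σ K)) :
    Set (σ →₀ ℕ) :=
  {a | (monomial a (1 : K) : MvPolynomial σ K) ∈ I ∧
    ∀ b < a, (monomial b (1 : K) : MvPolynomial σ K) ∉ I}

/-- The depth (w.r.t. the maximal graded ideal `m = (x_1,…,x_n)`) of a module `M` over the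
polynomial ring: the maximal length of a regular sequence on `M` consisting of elements
of `m`. -/
noncomputable def mdepth (K σ : Type*) [Field K] (M : Type*) [AddCommGroup M]
    [Module (MvPolynomial σ K) M] : ℕ :=
  sSup {k | ∃ rs : List (MvPolynomial σ K), rs.length = k ∧
    (∀ r ∈ rs, r ∈ Ideal.span (Set.range (X : σ → MvPolynomial σ K))) ∧
    RingTheory.Sequence.IsRegular M rs}

/-- The height of a prime ideal: the height of the corresponding point
of the prime spectrum, i.e. the supremum of lengths of chains of primes below it. -/
noncomputable def primeHt {R : Type*} [CommRing R] (P : Ideal R) (hP : P.IsPrime) : ℕ∞ :=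
  Order.height (⟨P, hP⟩ : PrimeSpectrum R)

/-!
Let `Aᵢ = G(Pᵢ)` and let `Dᵢ` be the set of exponents of the monomials outside `Qᵢ`. It is
determined by the coordinates in `Aᵢ`, which are bounded on it, and the monomials outside `I` are
those with exponents in `D₁ ∪ … ∪ Dₘ`. Both sides of Stanley's inequality are compared with
`n - ∑ #Aᵢ + (m - 1)`, by induction on `m`; let `W` be the union of the `Dᵢ` with `i ≥ 2`.

* Stanley depth: the exponents in question are the disjoint union of `D₁` and `D₁ᶜ ∩ W`. On `D₁`
  the variables in all other `Aᵢ` are free. As the coordinates of `D₁ᶜ` and `W` are disjoint,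
  partitions of the two multiply to one of the intersection, and that of `D₁ᶜ` has a free variable
  in every part, because `D₁ᶜ` is closed under increasing the exponents.

* Depth: in the Mayer–Vietoris sequence of `Q₁` and `Q₂ ∩ … ∩ Qₘ`, the quotient by the sum of the
  two ideals has smaller depth than the other two quotients, by induction, so that the depth of the
  quotient by the intersection is one more than its depth. Depth is measured by the first
  nonvanishing `Ext` out of the residue field.
-/

section Grade

open CategoryTheory CategoryTheory.Abelian

universe u v w

/-- The grade of `Y` with respect to `X`: the first degree in which `Ext X Y` does not vanish. It
is encoded as a relation rather than a function so that no value has to be chosen when all the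
groups vanish. For a polynomial ring, with `X` the residue field at the origin, it bounds the depth
of `Y` from above. -/
def HasGrade {C : Type u} [Category.{v} C] [Abelian C] [HasExt.{w} C] (X Y : C) (d : ℕ) : Prop :=
  IsLeast {i | Nontrivial (Ext X Y i)} d

section Abelian

variable {C : Type u} [Category.{v} C] [Abelian C] [HasExt.{w} C] {X : C} {d : ℕ}

lemma HasGrade.subsingleton_ext {Y : C} (h : HasGrade X Y d) {i : ℕ} (hi : i < d) :
    Subsingleton (Ext X Y i) :=
  not_nontrivial_iff_subsingleton.1 fun hn ↦ (h.2 hn).not_gt hi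

variable {S : ShortComplex C} (hS : S.ShortExact)

include hS

lemma subsingleton_ext_X₁_of_shortExact {i : ℕ}
    (hf : ∀ x : Ext X S.X₁ i, x.comp (Ext.mk₀ S.f) (add_zero i) = 0)
    (h₃ : ∀ j, j + 1 = i → Subsingleton (Ext X S.X₃ j)) : Subsingleton (Ext X S.X₁ i) := by
  refine subsingleton_of_forall_eq 0 fun x ↦ ?_
  cases i with
  | zero =>
    have := hS.mono_f
    exact (injective_iff_map_eq_zero _).1 (Ext.postcomp_mk₀_injective_of_mono X S.f) x (hf x)
  | succ j =>
    have := h₃ j rfl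
    obtain ⟨y, rfl⟩ := Ext.covariant_sequence_exact₁ X hS x (hf x) rfl
    rw [Subsingleton.elim y 0, Ext.zero_comp]

lemma subsingleton_ext_X₂_of_shortExact {i : ℕ} (h₁ : Subsingleton (Ext X S.X₁ i))
    (h₃ : Subsingleton (Ext X S.X₃ i)) : Subsingleton (Ext X S.X₂ i) := by
  refine subsingleton_of_forall_eq 0 fun x ↦ ?_
  obtain ⟨y, rfl⟩ := Ext.covariant_sequence_exact₂ X hS x (Subsingleton.elim _ _)
  rw [Subsingleton.elim y 0, Ext.zero_comp]

lemma HasGrade.succ_of_shortExact (h₃ : HasGrade X S.X₃ d)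
    (h₁ : ∀ i ≤ d, ∀ x : Ext X S.X₁ i, x.comp (Ext.mk₀ S.f) (add_zero i) = 0)
    (h₂ : ∀ x : Ext X S.X₂ d, x.comp (Ext.mk₀ S.g) (add_zero d) = 0) :
    HasGrade X S.X₁ (d + 1) := by
  refine ⟨?_, fun i hi ↦ Nat.succ_le_of_lt (not_le.1 fun hid ↦ ?_)⟩
  · have : Nontrivial (Ext X S.X₃ d) := h₃.1
    obtain ⟨x, hx⟩ := exists_ne (0 : Ext X S.X₃ d)
    refine nontrivial_of_ne (x.comp hS.extClass rfl) 0 fun h ↦ hx ?_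
    obtain ⟨y, rfl⟩ := Ext.covariant_sequence_exact₃ X hS x rfl h
    exact h₂ y
  · exact not_nontrivial_iff_subsingleton.2 (subsingleton_ext_X₁_of_shortExact hS (h₁ i hid)
      fun j hj ↦ h₃.subsingleton_ext (by lia)) hi

end Abelian

section Module

variable {R : Type u} [CommRing R]

lemma HasGrade.succ_of_isSMulRegular [Small.{v} R] {N : ModuleCat.{v} R} {M M' : Type v}
    [AddCommGroup M] [Module R M] [AddCommGroup M'] [Module R M'] {r : R} {g : M →ₗ[R] M'} {d : ℕ}
    (hN : r ∈ Module.annihilator R N) (hM : IsSMulRegular M r)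
    (hg : Function.Surjective g) (hr : Function.Exact (LinearMap.lsmul R M r) g)
    (h : HasGrade N (ModuleCat.of R M') d) : HasGrade N (ModuleCat.of R M) (d + 1) := by
  have hS := ModuleCat.shortComplex_shortExact
    (ModuleCat.shortComplexOfCompEqZero _ g hr.linearMap_comp_eq_zero) hr hM hg
  have hzero (i : ℕ) (x : Ext N (ModuleCat.of R M) i) :
      x.comp (Ext.mk₀ (ModuleCat.ofHom (LinearMap.lsmul R M r))) (add_zero i) = 0 :=
    congr($(Ext.postcomp_smul_id_eq_zero_of_mem_annihilator (M := ModuleCat.of R M) hN i) x)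
  have : Subsingleton (Ext N (ModuleCat.of R M) d) :=
    subsingleton_ext_X₁_of_shortExact hS (hzero d) fun j hj ↦ h.subsingleton_ext (by lia)
  refine HasGrade.succ_of_shortExact hS h (fun i _ ↦ hzero i) fun x ↦ ?_
  rw [Subsingleton.elim x 0, Ext.zero_comp]

variable (I J : Ideal R)

lemma exact_lsmul_factor (r : R) :
    Function.Exact (LinearMap.lsmul R (R ⧸ I) r)
      (Submodule.factor (le_sup_left : I ≤ I ⊔ Ideal.span {r})) := by
  intro a
  obtain ⟨a, rfl⟩ := Ideal.Quotient.mk_surjective a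
  change Ideal.Quotient.mk (I ⊔ Ideal.span {r}) a = 0 ↔ _
  rw [Ideal.Quotient.eq_zero_iff_mem, sup_comm, Ideal.mem_span_singleton_sup]
  constructor
  · rintro ⟨c, b, hb, rfl⟩
    exact ⟨Ideal.Quotient.mk I c, Ideal.Quotient.eq.2 (by simpa [mul_comm] using hb)⟩
  · rintro ⟨c, hc⟩
    obtain ⟨c, rfl⟩ := Ideal.Quotient.mk_surjective c
    exact ⟨c, a - c * r, by
      simpa [mul_comm] using neg_mem (Ideal.Quotient.eq.1 hc : r * c - a ∈ I), by ring⟩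

variable {I J}

lemma HasGrade.quotient_succ_of_isSMulRegular {N : ModuleCat.{u} R} {r : R} {d : ℕ}
    (hN : r ∈ Module.annihilator R N) (hr : IsSMulRegular (R ⧸ I) r)
    (h : HasGrade N (ModuleCat.of R (R ⧸ I ⊔ Ideal.span {r})) d) :
    HasGrade N (ModuleCat.of R (R ⧸ I)) (d + 1) :=
  h.succ_of_isSMulRegular hN hr (Submodule.factor_surjective _) (exact_lsmul_factor I r)

lemma subsingleton_ext_prod [Small.{v} R] {N : ModuleCat.{v} R} {M M' : Type v} [AddCommGroup M]
    [Module R M] [AddCommGroup M'] [Module R M'] {i : ℕ}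
    (h : Subsingleton (Ext N (ModuleCat.of R M) i))
    (h' : Subsingleton (Ext N (ModuleCat.of R M') i)) :
    Subsingleton (Ext N (ModuleCat.of R (M × M')) i) :=
  subsingleton_ext_X₂_of_shortExact (ModuleCat.shortComplex_shortExact
    (ModuleCat.shortComplexOfCompEqZero (LinearMap.inl R M M') (LinearMap.snd R M M')
      (LinearMap.snd_comp_inl R M M')) .inl_snd LinearMap.inl_injective LinearMap.snd_surjective)
    h h'

variable (I J)

/-- The Mayer–Vietoris sequence `0 → R/(I ⊓ J) → R/I × R/J → R/(I ⊔ J) → 0` of two ideals, with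
maps `a ↦ (a, a)` and `(a, b) ↦ a - b`. -/
abbrev idealMayerVietoris : ShortComplex (ModuleCat.{u} R) :=
  ModuleCat.shortComplexOfCompEqZero (N := (R ⧸ I) × (R ⧸ J))
    ((Submodule.factor (inf_le_left : I ⊓ J ≤ I)).prod (Submodule.factor inf_le_right))
    ((Submodule.factor (le_sup_left : I ≤ I ⊔ J)).coprod (-Submodule.factor le_sup_right))
    (by ext; simp)

lemma idealMayerVietoris_shortExact : (idealMayerVietoris I J).ShortExact := by
  refine ModuleCat.shortComplex_shortExact _ ?_ ?_ ?_
  · rintro ⟨a, b⟩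
    obtain ⟨a, rfl⟩ := Ideal.Quotient.mk_surjective a
    obtain ⟨b, rfl⟩ := Ideal.Quotient.mk_surjective b
    change Ideal.Quotient.mk (I ⊔ J) a + -Ideal.Quotient.mk (I ⊔ J) b = 0 ↔ _
    rw [← sub_eq_add_neg, ← map_sub, Ideal.Quotient.eq_zero_iff_mem]
    constructor
    · intro hab
      obtain ⟨x, hx, y, hy, hxy⟩ := Submodule.mem_sup.1 hab
      refine ⟨Ideal.Quotient.mk (I ⊓ J) (a - x), Prod.ext (Ideal.Quotient.eq.2 ?_)
        (Ideal.Quotient.eq.2 ?_)⟩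
      · simpa using hx
      · change a - x - b ∈ J
        rwa [sub_right_comm, ← hxy, add_sub_cancel_left]
    · rintro ⟨c, hc⟩
      obtain ⟨c, rfl⟩ := Ideal.Quotient.mk_surjective c
      have hI : c - a ∈ I := Ideal.Quotient.eq.1 congr(($hc).1)
      have hJ : c - b ∈ J := Ideal.Quotient.eq.1 congr(($hc).2)
      rw [← sub_sub_sub_cancel_left _ _ c]
      exact sub_mem (Ideal.mem_sup_right hJ) (Ideal.mem_sup_left hI)
  · refine (injective_iff_map_eq_zero _).2 fun a ha ↦ ?_
    obtain ⟨a, rfl⟩ := Ideal.Quotient.mk_surjective a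
    exact Ideal.Quotient.eq_zero_iff_mem.2
      ⟨Ideal.Quotient.eq_zero_iff_mem.1 congr(($ha).1),
        Ideal.Quotient.eq_zero_iff_mem.1 congr(($ha).2)⟩
  · exact fun x ↦ (Submodule.factor_surjective le_sup_left x).imp' (·, 0) fun a ha ↦ by
      simpa using ha

variable {I J}

lemma HasGrade.quotient_inf_of_sup {N : ModuleCat.{u} R} {d : ℕ}
    (h : HasGrade N (ModuleCat.of R (R ⧸ I ⊔ J)) d)
    (hI : ∀ i ≤ d, Subsingleton (Ext N (ModuleCat.of R (R ⧸ I)) i))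
    (hJ : ∀ i ≤ d, Subsingleton (Ext N (ModuleCat.of R (R ⧸ J)) i)) :
    HasGrade N (ModuleCat.of R (R ⧸ I ⊓ J)) (d + 1) := by
  have hprod (i : ℕ) (hi : i ≤ d) := subsingleton_ext_prod (hI i hi) (hJ i hi)
  refine h.succ_of_shortExact (idealMayerVietoris_shortExact I J)
    (fun i hi x ↦ (hprod i hi).elim _ _) fun x ↦ ?_
  have := hprod d le_rfl
  rw [Subsingleton.elim x 0, Ext.zero_comp]

lemma hasGrade_zero_iff {N M : ModuleCat.{v} R} [Small.{v} R] :
    HasGrade N M 0 ↔ Nontrivial (N →ₗ[R] M) :=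
  (and_iff_left fun _ _ ↦ Nat.zero_le _).trans
    (Ext.addEquiv₀.trans ModuleCat.homAddEquiv).toEquiv.nontrivial_congr

lemma hasGrade_quotient_zero [IsNoetherianRing R] (hI : I ≠ ⊤) (hJ : J ≤ I.radical) :
    HasGrade (ModuleCat.of R (R ⧸ J)) (ModuleCat.of R (R ⧸ I)) 0 := by
  rw [hasGrade_zero_iff, ← not_subsingleton_iff_nontrivial]
  change ¬Subsingleton (R ⧸ J →ₗ[R] R ⧸ I)
  rw [IsSMulRegular.subsingleton_linearMap_iff]
  rintro ⟨r, hrJ, hr⟩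
  obtain ⟨k, hk⟩ := hJ (Ideal.annihilator_quotient (I := J) ▸ hrJ)
  have := Ideal.Quotient.nontrivial_iff.2 hI
  refine one_ne_zero (hr.pow k (?_ : r ^ k • (1 : R ⧸ I) = r ^ k • 0))
  rw [smul_zero, ← map_one (Ideal.Quotient.mk I)]
  exact Ideal.Quotient.eq_zero_iff_mem.2 (by simpa)

lemma HasGrade.length_le_of_isRegular [Small.{v} R] [IsNoetherianRing R] {N M : ModuleCat.{v} R}
    [Module.Finite R N] [Module.Finite R M] {d : ℕ} (h : HasGrade N M d)
    (hN : J ≤ Module.annihilator R N) (hM : J • (⊤ : Submodule R M) ≠ ⊤)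
    {rs : List R} (hmem : ∀ r ∈ rs, r ∈ J) (hreg : RingTheory.Sequence.IsRegular M rs) :
    rs.length ≤ d := by
  by_contra! hd
  have hsupp : Module.support R N ⊆ PrimeSpectrum.zeroLocus J :=
    Module.support_eq_zeroLocus.trans_subset (PrimeSpectrum.zeroLocus_anti_mono hN)
  have := ModuleCat.subsingleton_ext_of_exists_isRegular J N hsupp M (lt_top_iff_ne_top.2 hM) rs
    hmem hreg d hd
  exact not_nontrivial_iff_subsingleton.2 this h.1

lemma smul_top_quotient_ne_top (hIJ : I ⊔ J ≠ ⊤) : J • (⊤ : Submodule R (R ⧸ I)) ≠ ⊤ := by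
  rw [← Submodule.range_mkQ I, LinearMap.range_eq_map, ← Submodule.map_smul'', smul_eq_mul,
    Ideal.mul_top, ← LinearMap.range_eq_map, Submodule.range_mkQ]
  exact mt (Submodule.map_mkQ_eq_top _ _).1 hIJ

end Module

end Grade

section Depth

open CategoryTheory

universe u v

/-- The residue field of the polynomial ring at the origin, as a module. -/
noncomputable abbrev residueModule (K : Type u) [Field K] (σ : Type v) :
    ModuleCat (MvPolynomial σ K) :=
  ModuleCat.of _ (MvPolynomial σ K ⧸ idealOfVars σ K)

lemma mdepth_quotient_le_of_hasGrade {K : Type u} [Field K] {σ : Type v} [Finite σ]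
    {I : Ideal (MvPolynomial σ K)} (hI : I ⊔ idealOfVars σ K ≠ ⊤) {d : ℕ}
    (h : HasGrade (residueModule K σ) (ModuleCat.of _ (MvPolynomial σ K ⧸ I)) d) :
    mdepth K σ (MvPolynomial σ K ⧸ I) ≤ d := by
  refine csSup_le' ?_
  rintro _ ⟨rs, rfl, hmem, hreg⟩
  exact h.length_le_of_isRegular (M := ModuleCat.of _ (MvPolynomial σ K ⧸ I))
    Ideal.annihilator_quotient.ge (smul_top_quotient_ne_top hI) hmem hreg

lemma mdepth_eq_zero_of_subsingleton {K σ M : Type*} [Field K] [AddCommGroup M]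
    [Module (MvPolynomial σ K) M] [Subsingleton M] : mdepth K σ M = 0 := by
  refine Nat.eq_zero_of_le_zero (csSup_le' ?_)
  rintro _ ⟨rs, -, -, hreg⟩
  exact absurd hreg.nontrivial (not_nontrivial M)

end Depth

section MonomialIdeal

universe u v

variable (K : Type u) [Field K] {σ : Type v}

/-- The monomial ideal whose standard exponents (the exponents of the monomials outside it) form
the lower set `D`. In these terms sums of monomial ideals are intersections of lower sets. -/
noncomputable def monomialIdeal (D : LowerSet (σ →₀ ℕ)) : Ideal (MvPolynomial σ K) :=
  restrictSupportIdeal K (Dᶜ : Set (σ →₀ ℕ)) D.lower.compl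

/-- The quotient of the polynomial ring by a monomial ideal, as a module. -/
noncomputable abbrev monomialQuotient (D : LowerSet (σ →₀ ℕ)) : ModuleCat (MvPolynomial σ K) :=
  ModuleCat.of _ (MvPolynomial σ K ⧸ monomialIdeal K D)

/-- The lower set of exponents of the monomials not divisible by `X x`. -/
def coordHyperplane (x : σ) : LowerSet (σ →₀ ℕ) :=
  ⟨{a | a x = 0}, fun _ _ hba ha ↦ Nat.eq_zero_of_le_zero ((hba x).trans_eq ha)⟩

variable {K} {D D' : LowerSet (σ →₀ ℕ)}

lemma mem_coordHyperplane {x : σ} {a : σ →₀ ℕ} : a ∈ coordHyperplane x ↔ a x = 0 := Iff.rfl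

lemma mem_monomialIdeal {f : MvPolynomial σ K} :
    f ∈ monomialIdeal K D ↔ ∀ a ∈ D, coeff a f = 0 := by
  change (f.support : Set (σ →₀ ℕ)) ⊆ (Dᶜ : Set (σ →₀ ℕ)) ↔ _
  rw [Set.subset_compl_comm]
  simp only [Set.subset_def, SetLike.mem_coe, Set.mem_compl_iff, notMem_support_iff]

lemma restrictScalars_monomialIdeal :
    (monomialIdeal K D).restrictScalars K = restrictSupport K (Dᶜ : Set (σ →₀ ℕ)) := rfl

lemma monomial_mem_monomialIdeal {a : σ →₀ ℕ} (ha : a ∉ D) (c : K) :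
    monomial a c ∈ monomialIdeal K D :=
  (monomial_mem_restrictSupport K).2 (.inl ha)

lemma monomialIdeal_anti (h : D ≤ D') : monomialIdeal K D' ≤ monomialIdeal K D :=
  restrictSupport_mono K (Set.compl_subset_compl.2 h)

lemma monomialIdeal_le_iff {J : Ideal (MvPolynomial σ K)} :
    monomialIdeal K D ≤ J ↔ ∀ a ∉ D, monomial a 1 ∈ J := by
  rw [← Submodule.restrictScalars_le K, restrictScalars_monomialIdeal, restrictSupport_eq_span,
    Submodule.span_le, Set.image_subset_iff]
  rfl

lemma monomialIdeal_sup :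
    monomialIdeal K (D ⊔ D') = monomialIdeal K D ⊓ monomialIdeal K D' := by
  ext f
  simp only [mem_monomialIdeal, LowerSet.mem_sup_iff, or_imp, forall_and, Submodule.mem_inf]

lemma monomialIdeal_inf :
    monomialIdeal K (D ⊓ D') = monomialIdeal K D ⊔ monomialIdeal K D' := by
  refine le_antisymm (monomialIdeal_le_iff.2 fun a ha ↦ ?_)
    (sup_le (monomialIdeal_anti inf_le_left) (monomialIdeal_anti inf_le_right))
  by_cases haD : a ∈ D
  · exact Ideal.mem_sup_right (monomial_mem_monomialIdeal (fun haD' ↦ ha ⟨haD, haD'⟩) 1)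
  · exact Ideal.mem_sup_left (monomial_mem_monomialIdeal haD 1)

lemma monomialIdeal_coordHyperplane (x : σ) :
    monomialIdeal K (coordHyperplane x) = Ideal.span {X x} := by
  ext f
  rw [← Set.image_singleton, mem_ideal_span_X_image, mem_monomialIdeal]
  refine forall_congr' fun a ↦ ?_
  rw [← not_imp_not, mem_coordHyperplane, mem_support_iff]
  simp

lemma monomialIdeal_sup_idealOfVars_ne_top (hD : 0 ∈ D) :
    monomialIdeal K D ⊔ idealOfVars σ K ≠ ⊤ := by
  refine ne_top_of_le_ne_top (RingHom.ker_ne_top (constantCoeff : MvPolynomial σ K →+* K))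
    (sup_le (fun f hf ↦ mem_monomialIdeal.1 hf 0 hD) (Ideal.span_le.2 ?_))
  rintro _ ⟨x, rfl⟩
  exact constantCoeff_X K x

end MonomialIdeal

section PrimaryStaircase

open scoped Finset

universe u v

/-- The lower sets arising as standard exponents of a monomial ideal that is primary to the prime
ideal generated by the variables in `A`: membership is decided by the coordinates in `A`, which are
bounded. -/
structure IsPrimaryStaircase {σ : Type v} (A : Finset σ) (D : LowerSet (σ →₀ ℕ)) : Prop where
  zero_mem : 0 ∈ D
  mem_of_eqOn : ∀ a b : σ →₀ ℕ, Set.EqOn a b A → a ∈ D → b ∈ D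
  bounded : ∃ N, ∀ a ∈ D, ∀ x ∈ A, a x < N

variable {σ : Type v} {A B : Finset σ} {D E : LowerSet (σ →₀ ℕ)}

lemma IsPrimaryStaircase.inf [DecidableEq σ] (hD : IsPrimaryStaircase A D)
    (hE : IsPrimaryStaircase B E) : IsPrimaryStaircase (A ∪ B) (D ⊓ E) where
  zero_mem := ⟨hD.zero_mem, hE.zero_mem⟩
  mem_of_eqOn a b hab ha :=
    ⟨hD.mem_of_eqOn a b (hab.mono (by simp)) ha.1, hE.mem_of_eqOn a b (hab.mono (by simp)) ha.2⟩
  bounded := by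
    obtain ⟨M, hM⟩ := hD.bounded
    obtain ⟨N, hN⟩ := hE.bounded
    refine ⟨max M N, fun a ha x hx ↦ lt_max_iff.2 ?_⟩
    exact (Finset.mem_union.1 hx).imp (hM a ha.1 x) (hN a ha.2 x)

lemma isPrimaryStaircase_empty_top : IsPrimaryStaircase ∅ (⊤ : LowerSet (σ →₀ ℕ)) where
  zero_mem := trivial
  mem_of_eqOn _ _ _ _ := trivial
  bounded := ⟨0, by simp⟩

lemma isPrimaryStaircase_coordHyperplane (x : σ) :
    IsPrimaryStaircase {x} (coordHyperplane x) where
  zero_mem := rfl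
  mem_of_eqOn a b hab ha := (hab (by simp : x ∈ _)).symm.trans ha
  bounded := ⟨1, fun a ha y hy ↦ by simp_all [mem_coordHyperplane]⟩

lemma IsPrimaryStaircase.exists_truncation {A : Finset σ} (hD : IsPrimaryStaircase A D) :
    ∃ e : σ →₀ ℕ, e.support ⊆ A ∧ ∀ a, a ⊓ e ∈ D → a ∈ D := by
  obtain ⟨N, hN⟩ := hD.bounded
  refine ⟨Finsupp.indicator A fun _ _ ↦ N, Finsupp.support_indicator_subset .., fun a ha ↦
    hD.mem_of_eqOn _ _ (fun x hx ↦ ?_) ha⟩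
  have := hN _ ha x hx
  rw [Finsupp.inf_apply, Finsupp.indicator_of_mem hx] at this ⊢
  lia

variable {K : Type u} [Field K]

lemma IsPrimaryStaircase.isSMulRegular_X (hD : IsPrimaryStaircase A D) {x : σ} (hx : x ∉ A) :
    IsSMulRegular (MvPolynomial σ K ⧸ monomialIdeal K D) (X x : MvPolynomial σ K) := by
  refine isSMulRegular_iff_right_eq_zero_of_smul.2 fun f hf ↦ ?_
  obtain ⟨f, rfl⟩ := Ideal.Quotient.mk_surjective f
  have hXf := mem_monomialIdeal.1
    (Ideal.Quotient.eq_zero_iff_mem.1 hf : X x * f ∈ monomialIdeal K D)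
  refine Ideal.Quotient.eq_zero_iff_mem.2 (mem_monomialIdeal.2 fun a ha ↦ ?_)
  rw [← coeff_X_mul]
  refine hXf _ (hD.mem_of_eqOn a _ (fun y hy ↦ ?_) ha)
  simp [ne_of_mem_of_not_mem hy hx]

lemma IsPrimaryStaircase.ne_top (hD : IsPrimaryStaircase A D) : monomialIdeal K D ≠ ⊤ :=
  fun h ↦ monomialIdeal_sup_idealOfVars_ne_top hD.zero_mem (by rw [h, top_sup_eq])

lemma IsPrimaryStaircase.X_mem_radical (hD : IsPrimaryStaircase A D) {x : σ} (hx : x ∈ A) :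
    X x ∈ (monomialIdeal K D).radical := by
  obtain ⟨N, hN⟩ := hD.bounded
  refine ⟨N, ?_⟩
  rw [X_pow_eq_monomial]
  exact monomial_mem_monomialIdeal (fun h ↦ (hN _ h x hx).ne (by simp)) 1

variable [Fintype σ] [DecidableEq σ]

lemma IsPrimaryStaircase.hasGrade (hD : IsPrimaryStaircase A D) :
    HasGrade (residueModule K σ) (monomialQuotient K D) #Aᶜ := by
  induction hk : #Aᶜ generalizing A D with
  | zero =>
    refine hasGrade_quotient_zero hD.ne_top (Ideal.span_le.2 ?_)
    rintro _ ⟨x, rfl⟩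
    refine hD.X_mem_radical ?_
    rw [Finset.card_eq_zero, Finset.compl_eq_empty_iff] at hk
    exact hk ▸ Finset.mem_univ x
  | succ k ih =>
    obtain ⟨x, hx⟩ := Finset.card_pos.1 (hk ▸ k.succ_pos : 0 < #Aᶜ)
    rw [Finset.mem_compl] at hx
    have hcard : #(A ∪ {x})ᶜ = k := by
      rw [Finset.union_comm, ← Finset.insert_eq, Finset.compl_insert,
        Finset.card_erase_of_mem (by simpa), hk, Nat.add_sub_cancel]
    have hslice := ih (hD.inf (isPrimaryStaircase_coordHyperplane x)) hcard
    rw [monomialQuotient, monomialIdeal_inf, monomialIdeal_coordHyperplane] at hslice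
    refine hslice.quotient_succ_of_isSMulRegular ?_ (hD.isSMulRegular_X hx)
    exact Ideal.annihilator_quotient.ge (Ideal.subset_span ⟨x, rfl⟩)

lemma nontrivial_cons {ι : Type*} {s : Finset ι} {i : ι} (hi : i ∉ s) (hs : s.Nonempty) :
    (s.cons i hi).Nontrivial := by
  rw [← Finset.one_lt_card_iff_nontrivial, Finset.card_cons]
  exact Nat.succ_lt_succ hs.card_pos

lemma card_compl_union_add_card (h : Disjoint A B) : #(A ∪ B)ᶜ + #B = #Aᶜ := by
  rw [Finset.compl_union, ← Finset.sdiff_eq_inter_compl,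
    Finset.card_sdiff_add_card_eq_card h.le_compl_left]

lemma IsPrimaryStaircase.hasGrade_inf_sup {ι : Type*} {s : Finset ι} (hs : s.Nonempty)
    {A : ι → Finset σ} {D : ι → LowerSet (σ →₀ ℕ)}
    (hA : s.Nontrivial → ∀ i ∈ s, (A i).Nonempty)
    (hD : ∀ i ∈ s, IsPrimaryStaircase (A i) (D i)) (hE : IsPrimaryStaircase B E)
    (hdisj : (s : Set ι).PairwiseDisjoint A) (hB : ∀ i ∈ s, Disjoint B (A i)) :
    HasGrade (residueModule K σ) (monomialQuotient K (E ⊓ s.sup D))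
      (#(B ∪ s.biUnion A)ᶜ + (#s - 1)) := by
  induction hs using Finset.Nonempty.cons_induction generalizing B E with
  | singleton i => simpa using (hE.inf (hD i (by simp))).hasGrade
  | cons i s hi hs ih =>
    have hs_pos : 0 < #s := hs.card_pos
    have hA := hA (nontrivial_cons hi hs)
    simp only [Finset.forall_mem_cons] at hA hD hB
    rw [Finset.coe_cons, Set.pairwiseDisjoint_insert_of_notMem (by simpa)] at hdisj
    have hU := hE.inf hD.1
    have hBC : Disjoint B (s.biUnion A) := (Finset.disjoint_biUnion_right ..).2 hB.2
    have hiC : Disjoint (A i) (s.biUnion A) := (Finset.disjoint_biUnion_right ..).2 hdisj.2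
    -- The right end `(E ⊓ D i) ⊓ W` of the Mayer–Vietoris sequence of `E ⊓ D i` and `E ⊓ W`, for
    -- `W = s.sup D`, is again of the form covered by the induction hypothesis: this is why `E`
    -- is carried along.
    have hUW := ih (fun _ ↦ hA.2) hD.2 hU hdisj.1
      fun j hj ↦ Finset.disjoint_union_left.2 ⟨hB.2 j hj, hdisj.2 j hj⟩
    have hW := ih (fun _ ↦ hA.2) hD.2 hE hdisj.1 hB.2
    have hcardU := card_compl_union_add_card (Finset.disjoint_union_left.2 ⟨hBC, hiC⟩)
    have hcardW := card_compl_union_add_card (Finset.disjoint_union_left.2 ⟨hB.1, hiC.symm⟩)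
    rw [Finset.union_right_comm] at hcardW
    have hcard : #s ≤ #(s.biUnion A) := Finset.card_le_card_biUnion hdisj.1 hA.2
    have hi_pos : 0 < #(A i) := hA.1.card_pos
    rw [inf_assoc, inf_inf_distrib_left, monomialQuotient, monomialIdeal_inf] at hUW
    have h := hUW.quotient_inf_of_sup
      (fun j hj ↦ hU.hasGrade.subsingleton_ext (by lia)) fun j hj ↦ hW.subsingleton_ext (by lia)
    rw [← monomialIdeal_sup, ← inf_sup_left, ← Finset.sup_cons hi] at h
    convert h using 1
    classical
    rw [Finset.cons_eq_insert, Finset.biUnion_insert, Finset.union_assoc,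
      Finset.card_insert_of_notMem hi]
    lia

end PrimaryStaircase

section StanleyPartition

open scoped Finset

universe v

variable {σ : Type v}

/-- The exponents `a` whose coordinates in `C` dominate those of `u`, with equality off `Z`. For
`C = univ` these are the exponents of the monomials in the Stanley space `x ^ u • K[Z]`. -/
def stanleyBox (C : Finset σ) (u : σ → ℕ) (Z : Finset σ) : Set (σ →₀ ℕ) :=
  {a | ∀ x ∈ C, u x ≤ a x ∧ (x ∉ Z → a x = u x)}

/-- The set `T` of exponents is the disjoint union of finitely many boxes `stanleyBox C u Z` with
`Z ⊆ C` and `d ≤ #Z`. -/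
def HasStanleyPartition (C : Finset σ) (T : Set (σ →₀ ℕ)) (d : ℕ) : Prop :=
  ∃ (ι : Type) (_ : Finite ι) (u : ι → σ → ℕ) (Z : ι → Finset σ),
    (∀ i, Z i ⊆ C ∧ d ≤ #(Z i) ∧ stanleyBox C (u i) (Z i) ⊆ T) ∧
      ∀ a ∈ T, ∃! i, a ∈ stanleyBox C (u i) (Z i)

variable {C C' : Finset σ} {T T' : Set (σ →₀ ℕ)} {d d' : ℕ}

lemma HasStanleyPartition.of_finite {κ : Type*} [Finite κ] {u : κ → σ → ℕ} {Z : κ → Finset σ}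
    (h : ∀ i, Z i ⊆ C ∧ d ≤ #(Z i) ∧ stanleyBox C (u i) (Z i) ⊆ T)
    (hT : ∀ a ∈ T, ∃! i, a ∈ stanleyBox C (u i) (Z i)) : HasStanleyPartition C T d := by
  obtain ⟨n, ⟨e⟩⟩ := Finite.exists_equiv_fin κ
  exact ⟨Fin n, inferInstance, u ∘ e.symm, Z ∘ e.symm, fun i ↦ h (e.symm i),
    fun a ha ↦ e.existsUnique_congr_left.1 (hT a ha)⟩

lemma HasStanleyPartition.mono (h : HasStanleyPartition C T d) (hd : d' ≤ d) :
    HasStanleyPartition C T d' := by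
  obtain ⟨ι, hι, u, Z, hZ, hT⟩ := h
  exact ⟨ι, hι, u, Z, fun i ↦ ⟨(hZ i).1, hd.trans (hZ i).2.1, (hZ i).2.2⟩, hT⟩

lemma hasStanleyPartition_univ : HasStanleyPartition C Set.univ #C :=
  ⟨Unit, inferInstance, 0, fun _ ↦ C, fun _ ↦ ⟨subset_rfl, le_rfl, Set.subset_univ _⟩,
    fun _ _ ↦ ⟨(), fun _ hx ↦ ⟨Nat.zero_le _, absurd hx⟩, fun _ _ ↦ rfl⟩⟩

lemma HasStanleyPartition.union (h : HasStanleyPartition C T d) (h' : HasStanleyPartition C T' d)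
    (hTT' : Disjoint T T') : HasStanleyPartition C (T ∪ T') d := by
  obtain ⟨ι, hι, u, Z, hZ, hT⟩ := h
  obtain ⟨ι', hι', u', Z', hZ', hT'⟩ := h'
  refine ⟨ι ⊕ ι', inferInstance, Sum.elim u u', Sum.elim Z Z', ?_, ?_⟩
  · rintro (i | i)
    · exact ⟨(hZ i).1, (hZ i).2.1, Set.subset_union_of_subset_left (hZ i).2.2 _⟩
    · exact ⟨(hZ' i).1, (hZ' i).2.1, Set.subset_union_of_subset_right (hZ' i).2.2 _⟩
  · rintro a (ha | ha)
    · obtain ⟨i, hi, huniq⟩ := hT a ha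
      refine ⟨.inl i, hi, ?_⟩
      rintro (j | j) hj
      · exact congrArg _ (huniq j hj)
      · exact (hTT'.notMem_of_mem_left ha ((hZ' j).2.2 hj)).elim
    · obtain ⟨i, hi, huniq⟩ := hT' a ha
      refine ⟨.inr i, hi, ?_⟩
      rintro (j | j) hj
      · exact (hTT'.notMem_of_mem_right ha ((hZ j).2.2 hj)).elim
      · exact congrArg _ (huniq j hj)

lemma stanleyBox_union [DecidableEq σ] (hCC' : Disjoint C C') {Z Z' : Finset σ}
    (hZ : Z ⊆ C) (hZ' : Z' ⊆ C') (u u' : σ → ℕ) :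
    stanleyBox (C ∪ C') (C.piecewise u u') (Z ∪ Z') = stanleyBox C u Z ∩ stanleyBox C' u' Z' := by
  ext a
  simp only [stanleyBox, Finset.forall_mem_union, Set.mem_ofPred_eq, Set.mem_inter_iff]
  refine and_congr (forall₂_congr fun x hx ↦ ?_) (forall₂_congr fun x hx ↦ ?_)
  · have hxZ' : x ∉ Z' := fun h ↦ Finset.disjoint_left.1 hCC' hx (hZ' h)
    simp [hx, hxZ']
  · have hxC : x ∉ C := Finset.disjoint_right.1 hCC' hx
    simp [hxC, mt (@hZ x) hxC]

lemma HasStanleyPartition.inter [DecidableEq σ] (h : HasStanleyPartition C T d)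
    (h' : HasStanleyPartition C' T' d') (hCC' : Disjoint C C') :
    HasStanleyPartition (C ∪ C') (T ∩ T') (d + d') := by
  obtain ⟨ι, hι, u, Z, hZ, hT⟩ := h
  obtain ⟨ι', hι', u', Z', hZ', hT'⟩ := h'
  have hbox (i : ι × ι') := stanleyBox_union hCC' (hZ i.1).1 (hZ' i.2).1 (u i.1) (u' i.2)
  refine ⟨ι × ι', inferInstance, fun i ↦ C.piecewise (u i.1) (u' i.2), fun i ↦ Z i.1 ∪ Z' i.2,
    fun i ↦ ⟨Finset.union_subset_union (hZ _).1 (hZ' _).1, ?_, ?_⟩, fun a ha ↦ ?_⟩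
  · rw [Finset.card_union_of_disjoint (hCC'.mono (hZ _).1 (hZ' _).1)]
    exact add_le_add (hZ _).2.1 (hZ' _).2.1
  · exact (hbox i).trans_subset (Set.inter_subset_inter (hZ _).2.2 (hZ' _).2.2)
  · simp only [hbox]
    obtain ⟨i, hi, huniq⟩ := hT a ha.1
    obtain ⟨i', hi', huniq'⟩ := hT' a ha.2
    exact ⟨(i, i'), ⟨hi, hi'⟩, fun j hj ↦ Prod.ext (huniq _ hj.1) (huniq' _ hj.2)⟩

variable {D : LowerSet (σ →₀ ℕ)} {e : σ →₀ ℕ}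

lemma mem_stanleyBox_iff_inf_eq {u : σ →₀ ℕ} (he : e.support ⊆ C) (hu : u ≤ e) {a : σ →₀ ℕ} :
    a ∈ stanleyBox C u {x ∈ C | u x = e x} ↔ a ⊓ e = u := by
  rw [Finsupp.ext_iff]
  refine forall_congr' fun x ↦ ?_
  have hux := hu x
  by_cases hx : x ∈ C
  · simp only [hx, Finset.mem_filter, true_and, forall_const, Finsupp.inf_apply]
    grind
  · have hex : e x = 0 := Finsupp.notMem_support_iff.1 (mt (@he x) hx)
    simp only [hx, Finsupp.inf_apply]
    grind

lemma hasStanleyPartition_lowerSet (he : e.support ⊆ C) (hD : ∀ a, a ⊓ e ∈ D → a ∈ D) :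
    HasStanleyPartition C (D : Set (σ →₀ ℕ)) 0 := by
  classical
  have : Finite {u : σ →₀ ℕ // u ≤ e ∧ u ∈ D} :=
    (Set.finite_Iic e).subset fun _ h ↦ h.1
  refine .of_finite (u := fun u : {u : σ →₀ ℕ // u ≤ e ∧ u ∈ D} ↦ u.1)
    (Z := fun u ↦ {x ∈ C | u.1 x = e x})
    (fun u ↦ ⟨Finset.filter_subset _ _, Nat.zero_le _, fun a ha ↦ hD a ?_⟩) fun a ha ↦ ?_
  · rw [(mem_stanleyBox_iff_inf_eq he u.2.1).1 ha]
    exact u.2.2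
  · refine ⟨⟨a ⊓ e, inf_le_right, D.lower inf_le_left ha⟩,
      (mem_stanleyBox_iff_inf_eq he inf_le_right).2 rfl, fun u hu ↦ ?_⟩
    exact Subtype.ext ((mem_stanleyBox_iff_inf_eq he u.2.1).1 hu).symm

lemma mem_stanleyBox_insert_iff [DecidableEq σ] {u : σ →₀ ℕ} (he : e.support ⊆ C) (hu : u ≤ e)
    {x : σ} (hx : x ∈ C) {a : σ →₀ ℕ} :
    a ∈ stanleyBox C u (insert x {y ∈ C | u y = e y}) ↔
      u x ≤ a x ∧ (a ⊓ e).update x (u x) = u := by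
  have hmem : u x ≤ a x ∧ (a ⊓ e).update x (u x) = u ↔
      ∀ y, if y = x then u x ≤ a x else min (a y) (e y) = u y := by
    rw [Finsupp.ext_iff]
    refine ⟨fun h y ↦ ?_, fun h ↦ ⟨by simpa using h x, fun y ↦ ?_⟩⟩
    · have := h.2 y
      grind [Finsupp.inf_apply]
    · have := h y
      grind [Finsupp.inf_apply]
  rw [hmem]
  refine forall_congr' fun y ↦ ?_
  have huy := hu y
  have hey : y ∉ C → e y = 0 := fun hy ↦ Finsupp.notMem_support_iff.1 (mt (@he y) hy)
  grind

lemma existsUnique_lowest_notMem {b : σ →₀ ℕ} (hb : b ∉ D) (x : σ) :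
    ∃! u : σ →₀ ℕ, u ≤ b ∧ b.update x (u x) = u ∧ u ∉ D ∧ ∀ t < u x, u.update x t ∈ D := by
  classical
  have hbx : b x ∈ {t | b.update x t ∉ D} := by
    change b.update x (b x) ∉ D
    rwa [Finsupp.update_self]
  obtain ⟨t, ht⟩ : ∃ t, IsLeast {t | b.update x t ∉ D} t := ⟨_, isLeast_csInf ⟨_, hbx⟩⟩
  have htx : b.update x t x = t := by simp
  refine ⟨b.update x t, ⟨fun y ↦ ?_, by rw [htx], ht.1, fun s hs ↦ ?_⟩, ?_⟩
  · have := ht.2 hbx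
    grind
  · rw [Finsupp.update_idem]
    exact not_not.1 fun hsD ↦ (ht.2 hsD).not_gt (htx ▸ hs)
  · rintro u ⟨-, hu, huD, hmin⟩
    have hleast : IsLeast {t | b.update x t ∉ D} (u x) := by
      refine ⟨by rwa [← hu] at huD, fun s hs ↦ not_lt.1 fun hsu ↦ hs ?_⟩
      rw [← Finsupp.update_idem b x (u x), hu]
      exact hmin s hsu
    rw [← hu, hleast.unique ht]

lemma hasStanleyPartition_compl_lowerSet (he : e.support ⊆ C) (hD : ∀ a, a ⊓ e ∈ D → a ∈ D)
    (hC : C.Nonempty) : HasStanleyPartition C (Dᶜ : Set (σ →₀ ℕ)) 1 := by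
  classical
  obtain ⟨x, hx⟩ := hC
  -- Every line in the direction of `x` meets `Dᶜ` in an upper ray or not at all. The boxes are
  -- indexed by the lowest points `u` of these rays, truncated at `e`, and leave `x` free.
  let κ := {u : σ →₀ ℕ // u ≤ e ∧ u ∉ D ∧ ∀ t < u x, u.update x t ∈ D}
  have : Finite κ := (Set.finite_Iic e).subset fun _ h ↦ h.1
  have hbox (u : κ) (a : σ →₀ ℕ) := mem_stanleyBox_insert_iff he u.2.1 hx (a := a)
  refine .of_finite (u := fun u : κ ↦ u.1) (Z := fun u ↦ insert x {y ∈ C | u.1 y = e y})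
    (fun u ↦ ⟨?_, ?_, fun a ha haD ↦ u.2.2.1 (D.lower ?_ haD)⟩) fun a ha ↦ ?_
  · exact Finset.insert_subset hx (Finset.filter_subset _ _)
  · exact Finset.card_pos.2 (Finset.insert_nonempty ..)
  · obtain ⟨hxa, hu⟩ := (hbox u a).1 ha
    rw [← hu]
    intro y
    grind [Finsupp.inf_apply]
  · obtain ⟨u, ⟨hub, hu, hxu⟩, huniq⟩ := existsUnique_lowest_notMem (mt (hD a) ha) x
    refine ⟨⟨u, hub.trans inf_le_right, hxu⟩,
      (hbox ⟨u, _⟩ a).2 ⟨hub.trans inf_le_left x, hu⟩, fun v hv ↦ Subtype.ext ?_⟩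
    obtain ⟨hxa, hva⟩ := (hbox v a).1 hv
    refine huniq v ⟨fun y ↦ ?_, hva, v.2.2⟩
    have := v.2.1 x
    rw [← hva]
    grind [Finsupp.inf_apply]

lemma IsPrimaryStaircase.hasStanleyPartition_sup [DecidableEq σ] {ι : Type*} {s : Finset ι}
    (hs : s.Nonempty) {A : ι → Finset σ} {D : ι → LowerSet (σ →₀ ℕ)}
    (hA : s.Nontrivial → ∀ i ∈ s, (A i).Nonempty)
    (hD : ∀ i ∈ s, IsPrimaryStaircase (A i) (D i)) (hdisj : (s : Set ι).PairwiseDisjoint A) :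
    HasStanleyPartition (s.biUnion A) (s.sup D : LowerSet (σ →₀ ℕ)) (#s - 1) := by
  induction hs using Finset.Nonempty.cons_induction with
  | singleton i =>
    obtain ⟨e, he, hDe⟩ := (hD i (by simp)).exists_truncation
    simpa using hasStanleyPartition_lowerSet he hDe
  | cons i s hi hs ih =>
    have hA := hA (nontrivial_cons hi hs)
    simp only [Finset.forall_mem_cons] at hA hD
    rw [Finset.coe_cons, Set.pairwiseDisjoint_insert_of_notMem (by simpa)] at hdisj
    have hiC : Disjoint (A i) (s.biUnion A) := (Finset.disjoint_biUnion_right ..).2 hdisj.2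
    have hcard : #s ≤ #(s.biUnion A) := Finset.card_le_card_biUnion hdisj.1 hA.2
    obtain ⟨e, he, hDe⟩ := hD.1.exists_truncation
    have hin := (hasStanleyPartition_lowerSet he hDe).inter hasStanleyPartition_univ hiC
    have hout := (hasStanleyPartition_compl_lowerSet he hDe hA.1).inter
      (ih (fun _ ↦ hA.2) hD.2 hdisj.1) hiC
    have hs_pos : 0 < #s := hs.card_pos
    have h := (hin.mono (d' := #s) (by lia)).union (hout.mono (d' := #s) (by lia))
      (by rw [Set.inter_univ]; exact disjoint_compl_right.mono_right Set.inter_subset_left)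
    classical
    rw [Finset.cons_eq_insert, Finset.biUnion_insert, Finset.card_insert_of_notMem hi,
      Finset.sup_insert, LowerSet.coe_sup]
    rwa [Set.inter_univ, Set.union_inter_distrib_left, Set.union_compl_self, Set.univ_inter] at h

end StanleyPartition

section StanleyDecomposition

open scoped Finset

universe u v

variable {K : Type u} [Field K] {σ : Type v}

lemma restrictSupport_iUnion {ι : Sort*} (s : ι → Set (σ →₀ ℕ)) :
    restrictSupport K (⋃ i, s i) = ⨆ i, restrictSupport K (s i) := by
  simp only [restrictSupport_eq_span, Set.image_iUnion, Submodule.span_iUnion]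

lemma coeff_eq_zero_of_mem_restrictSupport {s : Set (σ →₀ ℕ)} {f : MvPolynomial σ K}
    (hf : f ∈ restrictSupport K s) {a : σ →₀ ℕ} (ha : a ∉ s) : coeff a f = 0 :=
  notMem_support_iff.1 (mt (@hf a) ha)

lemma disjoint_restrictSupport {s t : Set (σ →₀ ℕ)} (hst : Disjoint s t) :
    Disjoint (restrictSupport K s) (restrictSupport K t) := by
  refine Submodule.disjoint_def.2 fun f hs ht ↦ ext _ _ fun a ↦ ?_
  by_cases ha : a ∈ s
  · exact coeff_eq_zero_of_mem_restrictSupport ht (hst.notMem_of_mem_left ha)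
  · exact coeff_eq_zero_of_mem_restrictSupport hs ha

lemma IsStanleyDecompOfQuotient.le_sdepthQuot [Finite σ] {I : Ideal (MvPolynomial σ K)} {d : ℕ}
    {ι : Type} [Fintype ι] [Nonempty ι] {u : ι → σ →₀ ℕ} {Z : ι → Finset σ}
    (h : IsStanleyDecompOfQuotient I u Z) (hd : ∀ i, d ≤ #(Z i)) : d ≤ sdepthQuot I := by
  cases nonempty_fintype σ
  refine le_csSup ⟨Fintype.card σ, ?_⟩ ⟨ι, ‹_›, ‹_›, u, Z, h, hd⟩
  rintro _ ⟨_, _, ⟨i⟩, _, Z, _, hZ⟩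
  exact (hZ i).trans (Finset.card_le_univ _)

variable {D : LowerSet (σ →₀ ℕ)}

lemma disjoint_map_mkₐ_restrictSupport {s t : Set (σ →₀ ℕ)} (hs : s ⊆ D) (hst : Disjoint s t) :
    Disjoint ((restrictSupport K s).map (Ideal.Quotient.mkₐ K (monomialIdeal K D)).toLinearMap)
      ((restrictSupport K t).map (Ideal.Quotient.mkₐ K (monomialIdeal K D)).toLinearMap) := by
  refine Submodule.disjoint_def.2 ?_
  rintro _ ⟨f, hf, rfl⟩ ⟨g, hg, hgf⟩
  have hsub := mem_monomialIdeal.1 (Ideal.Quotient.eq.1 hgf : g - f ∈ monomialIdeal K D)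
  suffices f = 0 by rw [this, map_zero]
  ext a
  by_cases ha : a ∈ s
  · simpa [coeff_eq_zero_of_mem_restrictSupport hg (hst.notMem_of_mem_left ha)] using
      hsub a (hs ha)
  · exact coeff_eq_zero_of_mem_restrictSupport hf ha

lemma map_mkₐ_restrictSupport_lowerSet :
    (restrictSupport K (D : Set (σ →₀ ℕ))).map
      (Ideal.Quotient.mkₐ K (monomialIdeal K D)).toLinearMap = ⊤ := by
  refine eq_top_iff.2 fun q _ ↦ ?_
  obtain ⟨f, rfl⟩ := Ideal.Quotient.mk_surjective q
  have hf : f ∈ restrictSupport K (D : Set (σ →₀ ℕ)) ⊔ restrictSupport K (Dᶜ : Set (σ →₀ ℕ)) := by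
    rw [restrictSupport_eq_span, restrictSupport_eq_span, ← Submodule.span_union, ← Set.image_union,
      Set.union_compl_self, ← restrictSupport_eq_span, restrictSupport_univ]
    trivial
  obtain ⟨g, hg, h, hh, rfl⟩ := Submodule.mem_sup.1 hf
  refine ⟨g, hg, Ideal.Quotient.eq.2 ?_⟩
  rw [← neg_mem_iff, neg_sub, add_sub_cancel_left]
  exact hh

section Fintype

variable [Fintype σ]

lemma stanleySpace_eq_restrictSupport (u : σ →₀ ℕ) (Z : Finset σ) :
    stanleySpace K u Z = restrictSupport K (stanleyBox Finset.univ u Z) := by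
  rw [stanleySpace, restrictSupport_eq_span, ← Set.image_image (monomial · (1 : K)) (u + ·)]
  congr 2
  ext a
  constructor
  · rintro ⟨b, hb, rfl⟩ x -
    refine ⟨by simp, fun hx ↦ ?_⟩
    simpa using mt (@hb x) hx
  · intro ha
    refine ⟨a - u, fun x hx ↦ not_not.1 fun hxZ ↦ ?_,
      add_tsub_cancel_of_le fun x ↦ (ha x (Finset.mem_univ x)).1⟩
    simp [(ha x (Finset.mem_univ x)).2 hxZ] at hx

lemma isStanleyDecompOfQuotient_monomialIdeal {ι : Type} [Fintype ι] {u : ι → σ →₀ ℕ}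
    {Z : ι → Finset σ} (hD : ∀ i, stanleyBox Finset.univ (u i) (Z i) ⊆ D)
    (huniq : ∀ a ∈ D, ∃! i, a ∈ stanleyBox Finset.univ (u i) (Z i)) :
    IsStanleyDecompOfQuotient (monomialIdeal K D) u Z := by
  have hunion : ⋃ i, stanleyBox Finset.univ (u i) (Z i) = D :=
    (Set.iUnion_subset hD).antisymm fun a ha ↦ Set.mem_iUnion.2 (huniq a ha).exists
  simp only [IsStanleyDecompOfQuotient, stanleySpace_eq_restrictSupport,
    restrictScalars_monomialIdeal, ← Submodule.map_iSup, ← restrictSupport_iUnion, hunion,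
    map_mkₐ_restrictSupport_lowerSet, and_true]
  refine ⟨fun i ↦ disjoint_restrictSupport (Set.disjoint_compl_right_iff_subset.2 (hD i)),
    fun i ↦ ?_⟩
  simp only [← Submodule.map_iSup, ← restrictSupport_iUnion]
  refine disjoint_map_mkₐ_restrictSupport (hD i) (Set.disjoint_left.2 fun a hi hj ↦ ?_)
  simp only [Set.mem_iUnion] at hj
  obtain ⟨j, hji, hj⟩ := hj
  exact hji ((huniq a (hD i hi)).unique hj hi)

lemma HasStanleyPartition.le_sdepthQuot (hD : (D : Set (σ →₀ ℕ)).Nonempty) {d : ℕ}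
    (h : HasStanleyPartition Finset.univ (D : Set (σ →₀ ℕ)) d) :
    d ≤ sdepthQuot (monomialIdeal K D) := by
  obtain ⟨ι, hι, u, Z, hZ, hT⟩ := h
  obtain ⟨a, ha⟩ := hD
  have := Fintype.ofFinite ι
  have : Nonempty ι := (hT a ha).exists.nonempty
  exact (isStanleyDecompOfQuotient_monomialIdeal (u := fun i ↦ Finsupp.equivFunOnFinite.symm (u i))
    (fun i ↦ (hZ i).2.2) hT).le_sdepthQuot fun i ↦ (hZ i).2.1

end Fintype

end StanleyDecomposition

section PrimaryDecomposition

open scoped Finset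

universe u v

variable {K : Type u} [Field K] {σ : Type v}

/-- The exponents of the monomials outside an ideal. A monomial ideal is recovered from them by
`monomialIdeal`. -/
def standardExponents (Q : Ideal (MvPolynomial σ K)) : LowerSet (σ →₀ ℕ) where
  carrier := {a | monomial a 1 ∉ Q}
  lower' a b hba ha hb := ha <| by
    rw [← tsub_add_cancel_of_le hba, ← one_mul (1 : K), ← monomial_mul]
    exact Q.mul_mem_left _ hb

lemma mem_standardExponents {Q : Ideal (MvPolynomial σ K)} {a : σ →₀ ℕ} :
    a ∈ standardExponents Q ↔ monomial a 1 ∉ Q := Iff.rfl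

lemma IsMonomialIdeal.monomialIdeal_standardExponents {I : Ideal (MvPolynomial σ K)}
    (hI : IsMonomialIdeal I) : monomialIdeal K (standardExponents I) = I := by
  refine le_antisymm (monomialIdeal_le_iff.2 fun a ha ↦ not_not.1 ha) ?_
  obtain ⟨A, rfl⟩ := hI
  refine Ideal.span_le.2 ?_
  rintro _ ⟨a, ha, rfl⟩
  exact monomial_mem_monomialIdeal
    (not_not.2 (Ideal.subset_span (Set.mem_image_of_mem (monomial · 1) ha))) 1

lemma standardExponents_iInf {ι : Type*} [Fintype ι] (Q : ι → Ideal (MvPolynomial σ K)) :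
    standardExponents (⨅ i, Q i) = Finset.univ.sup fun i ↦ standardExponents (Q i) := by
  ext a
  simp [Finset.sup_univ_eq_iSup, mem_standardExponents]

lemma monomial_notMem_span_X_image {A : Set σ} {a : σ →₀ ℕ} (ha : ∀ x ∈ A, a x = 0) :
    monomial a (1 : K) ∉ Ideal.span (X '' A) := by
  rw [mem_ideal_span_X_image]
  intro h
  obtain ⟨x, hx, hax⟩ := h a (by classical simp [mem_support_iff, coeff_monomial])
  exact hax (ha x hx)

lemma nonempty_of_irredundant {ι : Type*} {Q : ι → Ideal (MvPolynomial σ K)}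
    (hirred : ∀ i, ¬ (⨅ j, ⨅ (_ : j ≠ i), Q j) ≤ Q i) [Nontrivial ι] {i : ι} {B : Set σ}
    (hB : (Q i).radical = Ideal.span (X '' B)) : B.Nonempty := by
  refine Set.nonempty_iff_ne_empty.2 ?_
  rintro rfl
  obtain ⟨j, hj⟩ := exists_ne i
  have hQ : Q i ≤ ⊥ := Ideal.le_radical.trans (by simp [hB])
  exact hirred j ((iInf₂_le i hj.symm).trans (hQ.trans bot_le))

variable {Q : Ideal (MvPolynomial σ K)} {A : Finset σ}

lemma mem_standardExponents_iff_filter_mem [DecidableEq σ] (hQ : Q.IsPrimary)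
    (hA : Q.radical = Ideal.span (X '' (A : Set σ))) {a : σ →₀ ℕ} :
    a ∈ standardExponents Q ↔ a.filter (· ∈ A) ∈ standardExponents Q := by
  have hsplit := a.filter_add_filter_not (· ∈ A)
  refine ⟨(standardExponents Q).lower (le_self_add.trans_eq hsplit), fun h ha ↦ h ?_⟩
  rw [← hsplit, ← one_mul (1 : K), ← monomial_mul] at ha
  refine ((Ideal.isPrimary_iff.1 hQ).2 ha).resolve_right ?_
  rw [hA]
  exact monomial_notMem_span_X_image fun x hx ↦ Finsupp.filter_apply_neg _ _ (not_not.2 hx)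

lemma isPrimaryStaircase_standardExponents (hQ : Q.IsPrimary)
    (hA : Q.radical = Ideal.span (X '' (A : Set σ))) :
    IsPrimaryStaircase A (standardExponents Q) where
  zero_mem h := (Ideal.isPrimary_iff.1 hQ).1 ((Ideal.eq_top_iff_one _).2 h)
  mem_of_eqOn a b hab ha := by
    classical
    rw [mem_standardExponents_iff_filter_mem hQ hA] at ha ⊢
    convert ha using 1
    ext x
    by_cases hx : x ∈ A
    · simpa [hx] using (hab hx).symm
    · simp [hx]
  bounded := by
    have hpow (x : σ) : ∃ N, x ∈ A → (X x ^ N : MvPolynomial σ K) ∈ Q := by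
      by_cases hx : x ∈ A
      · exact (hA.ge (Ideal.subset_span ⟨x, hx, rfl⟩) : X x ∈ Q.radical).imp fun _ h _ ↦ h
      · exact ⟨0, fun h ↦ absurd h hx⟩
    choose N hN using hpow
    refine ⟨A.sup N, fun a ha x hx ↦ lt_of_lt_of_le ?_ (Finset.le_sup hx)⟩
    by_contra! hle
    refine (standardExponents Q).lower (Finsupp.single_le_iff.2 hle) ha ?_
    rw [← X_pow_eq_monomial]
    exact hN x hx

end PrimaryDecomposition

section Comparison

open scoped Finset

universe u v

variable {K : Type u} [Field K] {σ : Type v} [Fintype σ] [DecidableEq σ] {ι : Type*}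
  {s : Finset ι} {A : ι → Finset σ} {D : ι → LowerSet (σ →₀ ℕ)}

lemma IsPrimaryStaircase.card_compl_add_le_sdepthQuot (hs : s.Nonempty)
    (hA : s.Nontrivial → ∀ i ∈ s, (A i).Nonempty)
    (hD : ∀ i ∈ s, IsPrimaryStaircase (A i) (D i)) (hdisj : (s : Set ι).PairwiseDisjoint A) :
    #(s.biUnion A)ᶜ + (#s - 1) ≤ sdepthQuot (monomialIdeal K (s.sup D)) := by
  have h := hasStanleyPartition_univ.inter
    (hasStanleyPartition_sup hs hA hD hdisj) disjoint_compl_left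
  rw [Set.univ_inter, Finset.union_comm, Finset.union_compl] at h
  obtain ⟨i, hi⟩ := hs
  exact h.le_sdepthQuot ⟨0, Finset.le_sup (f := D) hi (hD i hi).zero_mem⟩

lemma IsPrimaryStaircase.mdepth_le_card_compl_add (hs : s.Nonempty)
    (hA : s.Nontrivial → ∀ i ∈ s, (A i).Nonempty)
    (hD : ∀ i ∈ s, IsPrimaryStaircase (A i) (D i)) (hdisj : (s : Set ι).PairwiseDisjoint A) :
    mdepth K σ (MvPolynomial σ K ⧸ monomialIdeal K (s.sup D)) ≤
      #(s.biUnion A)ᶜ + (#s - 1) := by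
  have h := hasGrade_inf_sup (K := K) hs hA hD isPrimaryStaircase_empty_top hdisj
    (fun _ _ ↦ Finset.disjoint_empty_left _)
  rw [top_inf_eq, Finset.empty_union] at h
  obtain ⟨i, hi⟩ := hs
  exact mdepth_quotient_le_of_hasGrade
    (monomialIdeal_sup_idealOfVars_ne_top (Finset.le_sup (f := D) hi (hD i hi).zero_mem)) h

end Comparison

theorem sdepth_quot_ge_of_disjoint_primary_decomposition_general {K σ ι : Type*} [Field K]
    [Finite σ] [Fintype ι] {I : Ideal (MvPolynomial σ K)} (hI : IsMonomialIdeal I)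
    {Q : ι → Ideal (MvPolynomial σ K)} (hdecomp : I = ⨅ i, Q i)
    (hprimary : ∀ i, (Q i).IsPrimary) (hirred : ∀ i, ¬ (⨅ j, ⨅ (_ : j ≠ i), Q j) ≤ Q i)
    {A : ι → Finset σ} (hrad : ∀ i, (Q i).radical = Ideal.span (X '' (A i : Set σ)))
    (hdisj : Pairwise fun i j ↦ Disjoint (A i) (A j)) :
    Fintype.card ι - 1 ≤ sdepthQuot I ∧
      mdepth K σ (MvPolynomial σ K ⧸ I) ≤ sdepthQuot I := by
  classical
  cases nonempty_fintype σ
  cases isEmpty_or_nonempty ι with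
  | inl _ =>
    obtain rfl : I = ⊤ := by rw [hdecomp, iInf_of_empty]
    have : Subsingleton (MvPolynomial σ K ⧸ (⊤ : Ideal (MvPolynomial σ K))) :=
      Ideal.Quotient.subsingleton_iff.2 rfl
    simp [mdepth_eq_zero_of_subsingleton]
  | inr _ =>
    have hI_eq : monomialIdeal K (Finset.univ.sup fun i ↦ standardExponents (Q i)) = I := by
      rw [← standardExponents_iInf, ← hdecomp, hI.monomialIdeal_standardExponents]
    have hs := Finset.univ_nonempty (α := ι)
    have hA (h : (Finset.univ : Finset ι).Nontrivial) (i : ι) (_ : i ∈ Finset.univ) :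
        (A i).Nonempty :=
      have := Finset.univ_nontrivial_iff.1 h
      nonempty_of_irredundant hirred (hrad i)
    have hD (i : ι) (_ : i ∈ Finset.univ) :=
      isPrimaryStaircase_standardExponents (hprimary i) (hrad i)
    have hdisj := hdisj.set_pairwise (Finset.univ : Finset ι)
    have hsdepth :=
      IsPrimaryStaircase.card_compl_add_le_sdepthQuot (K := K) hs hA hD hdisj
    have hdepth := IsPrimaryStaircase.mdepth_le_card_compl_add (K := K) hs hA hD hdisj
    rw [hI_eq] at hsdepth hdepth
    exact ⟨le_add_self.trans hsdepth, hdepth.trans hsdepth⟩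

/-- If `I = Q_1 ∩ … ∩ Q_m` is a reduced primary decomposition with `P_i = √Q_i` and
`G(P_i) ∩ G(P_j) = ∅` for `i ≠ j`, then `sdepth S/I ≥ m - 1`; in particular
`sdepth S/I ≥ depth S/I` (Stanley's conjecture holds for `S/I`). -/
theorem sdepth_quot_ge_of_disjoint_primary_decomposition {K : Type*} [Field K] {n m : ℕ}
    (I : Ideal (MvPolynomial (Fin n) K)) (hI : IsMonomialIdeal I)
    (Q : Fin m → Ideal (MvPolynomial (Fin n) K))
    (hdecomp : I = ⨅ i, Q i)
    (hprimary : ∀ i, (Q i).IsPrimary)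
    (hirred : ∀ i, ¬ (⨅ j, ⨅ (_ : j ≠ i), Q j) ≤ Q i)
    (P : Fin m → Ideal (MvPolynomial (Fin n) K))
    (hrad : ∀ i, P i = (Q i).radical)
    (hdistinct : ∀ i j, i ≠ j → P i ≠ P j)
    (A : Fin m → Finset (Fin n))
    (hP : ∀ i, P i = Ideal.span
      ((fun j => (X j : MvPolynomial (Fin n) K)) '' (A i : Set (Fin n))))
    (hdisj : ∀ i j, i ≠ j → Disjoint (A i) (A j)) :
    m - 1 ≤ sdepthQuot I ∧
      mdepth K (Fin n) ((MvPolynomial (Fin n) K) ⧸ I) ≤ sdepthQuot I := by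
  obtain rfl : P = fun i ↦ (Q i).radical := funext hrad
  simpa using sdepth_quot_ge_of_disjoint_primary_decomposition_general hI hdecomp hprimary hirred
    hP hdisj
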